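/- For every n ≥ 1 and every 1 ≤ j ≤ n, one has λ_{n+j,2n}^{(2)} · pₙ(x_{n+j,2n}) · (qₙ′(x_{n+j,2n}))² ≥ (b₂ − a₂)^{−2} ∫_{[a₂,b₂]} qₙ(x)² pₙ(x) dμ₂(x). -/

import Mathlib

open MeasureTheory

/-- The data of the diagonal type II multiple orthogonal polynomial for an
Angelesco system with two intervals: its `2n` zeros, listed in increasing
order, with `n` of them in `(a₁,b₁)` and `n` of them in `(a₂,b₂)`, and the
multiple orthogonality conditions. -/
structure Angelesco (μ₁ μ₂ : Measure ℝ) (a₁ b₁ a₂ b₂ : ℝ) (n : ℕ) where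
  x : Fin (2 * n) → ℝ
  mono : StrictMono x
  mem1 : ∀ i : Fin (2 * n), (i : ℕ) < n → x i ∈ Set.Ioo a₁ b₁
  mem2 : ∀ i : Fin (2 * n), n ≤ (i : ℕ) → x i ∈ Set.Ioo a₂ b₂
  orth1 : ∀ k < n, ∫ t, (∏ i, (t - x i)) * t ^ k ∂μ₁ = 0
  orth2 : ∀ k < n, ∫ t, (∏ i, (t - x i)) * t ^ k ∂μ₂ = 0

/-- The quadrature weight `λ_{k,2n}^{(μ)} = ∫ ℓ_{k,2n} dμ`, where `ℓ_{k,2n}` is the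
`k`-th fundamental Lagrange polynomial for the nodes `x_{1,2n} < ⋯ < x_{2n,2n}`. -/
noncomputable def qweight {μ₁ μ₂ : Measure ℝ} {a₁ b₁ a₂ b₂ : ℝ} {n : ℕ}
    (ad : Angelesco μ₁ μ₂ a₁ b₁ a₂ b₂ n) (μ : Measure ℝ) (k : Fin (2 * n)) : ℝ :=
  ∫ t, (Lagrange.basis Finset.univ ad.x k).eval t ∂μ

/-- `pₙ(y) = ∏_{i=1}^{n} (y − x_{i,2n})`, the monic factor with zeros in `(a₁,b₁)`. -/
noncomputable def pnfun {μ₁ μ₂ : Measure ℝ} {a₁ b₁ a₂ b₂ : ℝ} {n : ℕ}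
    (ad : Angelesco μ₁ μ₂ a₁ b₁ a₂ b₂ n) : ℝ → ℝ :=
  fun y => ∏ i ∈ Finset.univ.filter (fun i : Fin (2 * n) => (i : ℕ) < n), (y - ad.x i)

/-- `qₙ(y) = ∏_{i=n+1}^{2n} (x_{i,2n} − y)`, the factor with zeros in `(a₂,b₂)`,
normalized to be positive on `[a₁,b₁]`. -/
noncomputable def qnfun {μ₁ μ₂ : Measure ℝ} {a₁ b₁ a₂ b₂ : ℝ} {n : ℕ}
    (ad : Angelesco μ₁ μ₂ a₁ b₁ a₂ b₂ n) : ℝ → ℝ :=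
  fun y => ∏ i ∈ Finset.univ.filter (fun i : Fin (2 * n) => n ≤ (i : ℕ)), (ad.x i - y)

/-!
For a node `xⱼ` in the second block, the polynomial `(qₙ / (X - xⱼ))² pₙ` has degree `3n - 2` and
vanishes at every node except `xⱼ`. The quadrature rule is therefore exact on it and its sum has a
single term, so that its integral is the weight at `xⱼ` times `pₙ(xⱼ) qₙ′(xⱼ)²`. On the support of
`μ₂` we have `pₙ ≥ 0` and `(x - xⱼ)² ≤ (b₂ - a₂)²`, hence this integral is at least
`(b₂ - a₂)⁻² ∫ qₙ² pₙ dμ₂`.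
-/

section NodalPolynomials

open Finset Lagrange Polynomial

lemma degree_divByMonic_lt_of_degree_lt_add {R : Type*} [Ring R] {f g : R[X]} {m : ℕ}
    (hg : g.Monic) (hf : f.degree < g.degree + m) : (f /ₘ g).degree < m := by
  nontriviality R
  rcases lt_or_ge f.degree g.degree with hlt | hle
  · simp [(divByMonic_eq_zero_iff hg).mpr hlt]
  · rw [← degree_add_divByMonic hg hle, degree_eq_natDegree hg.ne_zero] at hf
    exact lt_of_add_lt_add_left hf

variable {ι : Type*} [DecidableEq ι] {s B : Finset ι} {j : ι}

lemma modByMonic_nodal_eq_interpolate {F : Type*} [Field F] {v : ι → F} (hv : Set.InjOn v s)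
    (f : F[X]) : f %ₘ nodal s v = interpolate s v fun i => f.eval (v i) := by
  refine eq_interpolate_of_eval_eq _ hv ?_ fun i hi => ?_
  · simpa only [degree_nodal] using degree_modByMonic_lt f (nodal_monic (s := s) (v := v))
  · rw [modByMonic_eq_sub_mul_div, eval_sub, eval_mul, eval_nodal_at_node hi, zero_mul, sub_zero]

variable {R : Type*} [CommRing R] {v : ι → R}

lemma eval_nodal_erase_sq_mul_nodal_sdiff_eq_zero {i : ι} (hi : i ∈ s) (hij : i ≠ j) :
    (nodal (B.erase j) v ^ 2 * nodal (s \ B) v).eval (v i) = 0 := by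
  by_cases hiB : i ∈ B
  · simp [eval_nodal_at_node (v := v) (mem_erase.mpr ⟨hij, hiB⟩)]
  · simp [eval_nodal_at_node (v := v) (mem_sdiff.mpr ⟨hi, hiB⟩)]

lemma degree_nodal_erase_sq_mul_nodal_sdiff_lt [IsDomain R] {m : ℕ} (hBs : B ⊆ s) (hj : j ∈ B)
    (hB : #B ≤ m + 1) :
    (nodal (B.erase j) v ^ 2 * nodal (s \ B) v).degree < (#s + m : ℕ) := by
  have card_erase := card_erase_add_one hj
  have card_sdiff := card_sdiff_add_card_eq_card hBs
  rw [degree_mul, degree_pow, degree_nodal, degree_nodal, nsmul_eq_mul]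
  norm_cast
  lia

end NodalPolynomials

section Quadrature

open Finset Lagrange Polynomial

variable {μ : Measure ℝ}

lemma integrable_polynomial_eval (hmom : ∀ k : ℕ, Integrable (fun t : ℝ => t ^ k) μ) (f : ℝ[X]) :
    Integrable (fun t => f.eval t) μ := by
  simp only [eval_eq_sum_range]
  exact integrable_finsetSum _ fun k _ => (hmom k).const_mul _

lemma integral_eval_mul_eq_zero_of_degree_lt (hmom : ∀ k : ℕ, Integrable (fun t : ℝ => t ^ k) μ)
    {P f : ℝ[X]} {m : ℕ} (horth : ∀ k < m, ∫ t, P.eval t * t ^ k ∂μ = 0) (hf : f.degree < m) :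
    ∫ t, (P * f).eval t ∂μ = 0 := by
  have expand (t : ℝ) : (P * f).eval t = ∑ k ∈ f.support, f.coeff k * (P.eval t * t ^ k) := by
    rw [eval_mul, eval_eq_sum (p := f), sum_def, mul_sum]
    exact sum_congr rfl fun k _ => by ring
  have integrable_term (k : ℕ) : Integrable (fun t => P.eval t * t ^ k) μ :=
    (integrable_polynomial_eval hmom (P * X ^ k)).congr (.of_forall fun t => by simp)
  simp only [expand]
  rw [integral_finsetSum _ fun k _ => (integrable_term k).const_mul _]
  refine sum_eq_zero fun k hk => ?_
  have hkm : k < m := by exact_mod_cast (le_degree_of_mem_supp k hk).trans_lt hf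
  rw [integral_const_mul, horth k hkm, mul_zero]

variable {ι : Type*} [DecidableEq ι]

/-- The weight at the node `v i` of the interpolatory quadrature rule for `μ` with nodes `v k`,
`k ∈ s`. -/
noncomputable def lagrangeWeight (μ : Measure ℝ) (s : Finset ι) (v : ι → ℝ) (i : ι) : ℝ :=
  ∫ t, (Lagrange.basis s v i).eval t ∂μ

variable {s : Finset ι} {v : ι → ℝ} {m : ℕ}

lemma integral_interpolate_eq_sum (hmom : ∀ k : ℕ, Integrable (fun t : ℝ => t ^ k) μ) (r : ι → ℝ) :
    ∫ t, (interpolate s v r).eval t ∂μ = ∑ i ∈ s, r i * lagrangeWeight μ s v i := by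
  simp only [interpolate_apply, eval_finsetSum, eval_mul, eval_C]
  rw [integral_finsetSum _ fun i _ => (integrable_polynomial_eval hmom _).const_mul _]
  simp only [integral_const_mul, lagrangeWeight]

theorem integral_eval_eq_sum_lagrangeWeight (hmom : ∀ k : ℕ, Integrable (fun t : ℝ => t ^ k) μ)
    (hv : Set.InjOn v s) (horth : ∀ k < m, ∫ t, (nodal s v).eval t * t ^ k ∂μ = 0)
    {f : ℝ[X]} (hf : f.degree < (#s + m : ℕ)) :
    ∫ t, f.eval t ∂μ = ∑ i ∈ s, f.eval (v i) * lagrangeWeight μ s v i := by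
  have quotient_degree : (f /ₘ nodal s v).degree < m :=
    degree_divByMonic_lt_of_degree_lt_add nodal_monic (by simpa using hf)
  calc ∫ t, f.eval t ∂μ
      = ∫ t, (f %ₘ nodal s v).eval t + (nodal s v * (f /ₘ nodal s v)).eval t ∂μ := by
        simp only [← eval_add, modByMonic_add_div]
    _ = ∫ t, (f %ₘ nodal s v).eval t ∂μ := by
        rw [integral_add (integrable_polynomial_eval hmom _) (integrable_polynomial_eval hmom _),
          integral_eval_mul_eq_zero_of_degree_lt hmom horth quotient_degree, add_zero]
    _ = ∑ i ∈ s, f.eval (v i) * lagrangeWeight μ s v i := by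
        rw [modByMonic_nodal_eq_interpolate hv, integral_interpolate_eq_sum hmom]

lemma integral_nodal_erase_sq_mul_nodal_sdiff (hmom : ∀ k : ℕ, Integrable (fun t : ℝ => t ^ k) μ)
    (hv : Set.InjOn v s) (horth : ∀ k < m, ∫ t, (nodal s v).eval t * t ^ k ∂μ = 0)
    {B : Finset ι} (hBs : B ⊆ s) (hB : #B ≤ m + 1) {j : ι} (hj : j ∈ B) :
    ∫ t, (nodal (B.erase j) v ^ 2 * nodal (s \ B) v).eval t ∂μ =
      lagrangeWeight μ s v j * (nodal (s \ B) v).eval (v j) *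
        (nodal B v).derivative.eval (v j) ^ 2 := by
  rw [integral_eval_eq_sum_lagrangeWeight hmom hv horth
      (degree_nodal_erase_sq_mul_nodal_sdiff_lt hBs hj hB),
    sum_eq_single_of_mem j (hBs hj) fun i hi hij => by
      rw [eval_nodal_erase_sq_mul_nodal_sdiff_eq_zero hi hij, zero_mul],
    eval_nodal_derivative_eval_node_eq hj, eval_mul, eval_pow]
  ring

theorem integral_nodal_sq_mul_nodal_sdiff_le (hmom : ∀ k : ℕ, Integrable (fun t : ℝ => t ^ k) μ)
    (hv : Set.InjOn v s) (horth : ∀ k < m, ∫ t, (nodal s v).eval t * t ^ k ∂μ = 0)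
    {B : Finset ι} (hBs : B ⊆ s) (hB : #B ≤ m + 1) {j : ι} (hj : j ∈ B) {c : ℝ}
    (hc : ∀ᵐ t ∂μ, |t - v j| ≤ c) (hnonneg : ∀ᵐ t ∂μ, 0 ≤ (nodal (s \ B) v).eval t) :
    ∫ t, (nodal B v).eval t ^ 2 * (nodal (s \ B) v).eval t ∂μ ≤
      c ^ 2 * (lagrangeWeight μ s v j * (nodal (s \ B) v).eval (v j) *
        (nodal B v).derivative.eval (v j) ^ 2) := by
  rw [← integral_nodal_erase_sq_mul_nodal_sdiff hmom hv horth hBs hB hj, ← integral_const_mul]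
  refine integral_mono_ae ?_ ((integrable_polynomial_eval hmom _).const_mul _) ?_
  · exact (integrable_polynomial_eval hmom (nodal B v ^ 2 * nodal (s \ B) v)).congr
      (.of_forall fun t => by simp)
  filter_upwards [hc, hnonneg] with t hct ht
  calc (nodal B v).eval t ^ 2 * (nodal (s \ B) v).eval t
      = (t - v j) ^ 2 * ((nodal (B.erase j) v).eval t ^ 2 * (nodal (s \ B) v).eval t) := by
        rw [nodal_eq_mul_nodal_erase hj]
        simp only [eval_mul, eval_sub, eval_X, eval_C]
        ring
    _ ≤ c ^ 2 * ((nodal (B.erase j) v).eval t ^ 2 * (nodal (s \ B) v).eval t) :=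
        mul_le_mul_of_nonneg_right (sq_le_sq.mpr (hct.trans (le_abs_self c))) (by positivity)
    _ = c ^ 2 * (nodal (B.erase j) v ^ 2 * nodal (s \ B) v).eval t := by
        rw [eval_mul, eval_pow]

end Quadrature

namespace Angelesco

open Finset Lagrange Polynomial

variable {μ₁ μ₂ : Measure ℝ} {a₁ b₁ a₂ b₂ : ℝ} {n : ℕ}

/-- The indices of the zeros in `(a₂, b₂)`; the complement indexes the zeros in `(a₁, b₁)`. -/
def secondBlock (n : ℕ) : Finset (Fin (2 * n)) := univ.filter fun i => n ≤ (i : ℕ)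

lemma mem_secondBlock {i : Fin (2 * n)} : i ∈ secondBlock n ↔ n ≤ (i : ℕ) :=
  mem_filter_univ i

lemma univ_sdiff_secondBlock (n : ℕ) :
    univ \ secondBlock n = univ.filter fun i : Fin (2 * n) => (i : ℕ) < n := by
  ext i
  simp [mem_secondBlock]

lemma card_secondBlock (n : ℕ) : #(secondBlock n) = n := by
  have partition := card_sdiff_add_card_eq_card (subset_univ (secondBlock n))
  rw [univ_sdiff_secondBlock, Fin.card_filter_val_lt, card_univ, Fintype.card_fin] at partition
  lia

variable (ad : Angelesco μ₁ μ₂ a₁ b₁ a₂ b₂ n)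

lemma qweight_eq_lagrangeWeight (μ : Measure ℝ) (k : Fin (2 * n)) :
    qweight ad μ k = lagrangeWeight μ univ ad.x k :=
  rfl

lemma pnfun_eq_eval_nodal (t : ℝ) : pnfun ad t = (nodal (univ \ secondBlock n) ad.x).eval t := by
  rw [univ_sdiff_secondBlock, eval_nodal, pnfun]

lemma qnfun_eq_neg_one_pow_mul_eval_nodal (t : ℝ) :
    qnfun ad t = (-1) ^ n * (nodal (secondBlock n) ad.x).eval t := by
  calc qnfun ad t = ∏ i ∈ secondBlock n, -(t - ad.x i) := by simp only [qnfun, secondBlock, neg_sub]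
    _ = (-1) ^ n * (nodal (secondBlock n) ad.x).eval t := by
      rw [prod_neg, card_secondBlock, eval_nodal]

lemma qnfun_sq (t : ℝ) : qnfun ad t ^ 2 = (nodal (secondBlock n) ad.x).eval t ^ 2 := by
  rw [qnfun_eq_neg_one_pow_mul_eval_nodal, mul_pow, pow_right_comm, neg_one_sq, one_pow,
    one_mul]

lemma deriv_qnfun_sq (t : ℝ) :
    deriv (qnfun ad) t ^ 2 = (nodal (secondBlock n) ad.x).derivative.eval t ^ 2 := by
  rw [funext (qnfun_eq_neg_one_pow_mul_eval_nodal ad), deriv_const_mul_field, Polynomial.deriv,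
    mul_pow, pow_right_comm, neg_one_sq, one_pow, one_mul]

lemma pnfun_nonneg (hgap : b₁ ≤ a₂) {t : ℝ} (ht : a₂ ≤ t) : 0 ≤ pnfun ad t := by
  refine prod_nonneg fun i hi => sub_nonneg.mpr ?_
  exact (ad.mem1 i (mem_filter.mp hi).2).2.le.trans (hgap.trans ht)

lemma integral_nodal_mul_pow_eq_zero {k : ℕ} (hk : k < n) :
    ∫ t, (nodal univ ad.x).eval t * t ^ k ∂μ₂ = 0 := by
  simpa only [eval_nodal] using ad.orth2 k hk

end Angelesco

theorem angelesco_second_rule_weight_lower_bound_general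
    (μ₁ μ₂ : Measure ℝ) (a₁ b₁ a₂ b₂ : ℝ) (hgap : b₁ ≤ a₂)
    (hsupp₂ : μ₂ (Set.Icc a₂ b₂)ᶜ = 0)
    (hmom₂ : ∀ k : ℕ, Integrable (fun t : ℝ => t ^ k) μ₂)
    (n : ℕ) (ad : Angelesco μ₁ μ₂ a₁ b₁ a₂ b₂ n) (j : Fin (2 * n)) (hj : n ≤ (j : ℕ)) :
    ((b₂ - a₂) ^ 2)⁻¹ * ∫ t in Set.Icc a₂ b₂, (qnfun ad t) ^ 2 * pnfun ad t ∂μ₂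
      ≤ qweight ad μ₂ j * pnfun ad (ad.x j) * (deriv (qnfun ad) (ad.x j)) ^ 2 := by
  have hxj := ad.mem2 j hj
  have mem_Icc : ∀ᵐ t ∂μ₂, t ∈ Set.Icc a₂ b₂ := hsupp₂
  have dist_le : ∀ᵐ t ∂μ₂, |t - ad.x j| ≤ b₂ - a₂ := by
    filter_upwards [mem_Icc] with t ht
    exact Real.dist_le_of_mem_Icc ht (Set.Ioo_subset_Icc_self hxj)
  have nonneg : ∀ᵐ t ∂μ₂,
      0 ≤ (Lagrange.nodal (Finset.univ \ Angelesco.secondBlock n) ad.x).eval t := by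
    filter_upwards [mem_Icc] with t ht
    exact ad.pnfun_eq_eval_nodal t ▸ ad.pnfun_nonneg hgap ht.1
  rw [Measure.restrict_eq_self_of_ae_mem mem_Icc,
    inv_mul_le_iff₀ (pow_pos (sub_pos.mpr (hxj.1.trans hxj.2)) 2)]
  simp only [ad.qweight_eq_lagrangeWeight, ad.pnfun_eq_eval_nodal, ad.qnfun_sq, ad.deriv_qnfun_sq]
  exact integral_nodal_sq_mul_nodal_sdiff_le hmom₂ ad.mono.injective.injOn
    (fun k hk => ad.integral_nodal_mul_pow_eq_zero hk) (Finset.subset_univ _)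
    ((Angelesco.card_secondBlock n).trans_le n.le_succ) (Angelesco.mem_secondBlock.mpr hj)
    dist_le nonneg

/-- **Lower bound for the positive weights of the second rule:** for `1 ≤ j ≤ n`,
`λ_{n+j,2n}^{(2)} pₙ(x_{n+j,2n}) qₙ′(x_{n+j,2n})² ≥ (b₂−a₂)⁻² ∫_{[a₂,b₂]} qₙ² pₙ dμ₂`. -/
theorem angelesco_second_rule_weight_lower_bound
    (μ₁ μ₂ : Measure ℝ) [IsFiniteMeasure μ₁] [IsFiniteMeasure μ₂]
    (a₁ b₁ a₂ b₂ : ℝ) (hab₁ : a₁ < b₁) (hgap : b₁ ≤ a₂) (hab₂ : a₂ < b₂)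
    (hsupp₁ : μ₁ (Set.Icc a₁ b₁)ᶜ = 0) (hsupp₂ : μ₂ (Set.Icc a₂ b₂)ᶜ = 0)
    (hinf₁ : ∀ s : Finset ℝ, μ₁ ((s : Set ℝ))ᶜ ≠ 0)
    (hinf₂ : ∀ s : Finset ℝ, μ₂ ((s : Set ℝ))ᶜ ≠ 0)
    (hmom₁ : ∀ k : ℕ, Integrable (fun t : ℝ => t ^ k) μ₁)
    (hmom₂ : ∀ k : ℕ, Integrable (fun t : ℝ => t ^ k) μ₂)
    (n : ℕ) (hn : 1 ≤ n) (ad : Angelesco μ₁ μ₂ a₁ b₁ a₂ b₂ n)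
    (j : Fin (2 * n)) (hj : n ≤ (j : ℕ)) :
    ((b₂ - a₂) ^ 2)⁻¹ * ∫ t in Set.Icc a₂ b₂, (qnfun ad t) ^ 2 * pnfun ad t ∂μ₂
      ≤ qweight ad μ₂ j * pnfun ad (ad.x j) * (deriv (qnfun ad) (ad.x j)) ^ 2 := by
  exact angelesco_second_rule_weight_lower_bound_general μ₁ μ₂ a₁ b₁ a₂ b₂ hgap hsupp₂ hmom₂ n ad
    j hj
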